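/- Let (X, μ) be a measure space, 1 < p < ∞, and 0 < A < ∞. Let f₀ and f₁ be nonnegative measurable functions, not μ-almost everywhere equal, with ∫ f₀^p dμ = ∫ f₁^p dμ = A. Let V be a measurable function with V > 0 μ-almost everywhere such that V·f₀ and V·f₁ are μ-integrable. For t ∈ (0,1), set g_t := (1−t)f₀ + t f₁ and f_t := A^{1/p} ‖g_t‖_p^{−1} g_t. Then ∫ V f_t dμ > (1−t) ∫ V f₀ dμ + t ∫ V f₁ dμ. -/

import Mathlib

open MeasureTheory Filter Topology

/-- Strict concavity of `f ↦ ∫ V f dμ` along `L^p`-norm-preserving paths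
(inequality (eqn_concavity) in the proof of Theorem 4.2): if `f₀ ≠ f₁` a.e.,
both nonnegative with `∫ f₀^p = ∫ f₁^p = A`, `V > 0` a.e. with `V f₀, V f₁`
integrable, then the renormalized convex combination
`f_t = A^{1/p} ‖(1−t)f₀ + t f₁‖_p⁻¹ ((1−t)f₀ + t f₁)` satisfies
`∫ V f_t dμ > (1−t) ∫ V f₀ dμ + t ∫ V f₁ dμ` for `t ∈ (0,1)`. -/
theorem strict_concavity_linear_functional
    {X : Type*} [MeasurableSpace X] (μ : Measure X)
    (p A : ℝ) (hp : 1 < p) (hA : 0 < A)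
    (f₀ f₁ : X → ℝ) (h0m : Measurable f₀) (h1m : Measurable f₁)
    (h0nn : ∀ x, 0 ≤ f₀ x) (h1nn : ∀ x, 0 ≤ f₁ x)
    (h0int : Integrable (fun x => f₀ x ^ p) μ)
    (h1int : Integrable (fun x => f₁ x ^ p) μ)
    (h0A : ∫ x, f₀ x ^ p ∂μ = A) (h1A : ∫ x, f₁ x ^ p ∂μ = A)
    (hne : ¬ f₀ =ᵐ[μ] f₁)
    (V : X → ℝ) (hVm : Measurable V) (hVpos : ∀ᵐ x ∂μ, 0 < V x)
    (hV0int : Integrable (fun x => V x * f₀ x) μ)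
    (hV1int : Integrable (fun x => V x * f₁ x) μ)
    (t : ℝ) (ht : t ∈ Set.Ioo (0 : ℝ) 1) :
    (1 - t) * ∫ x, V x * f₀ x ∂μ + t * ∫ x, V x * f₁ x ∂μ <
      ∫ x, V x * (A ^ (1 / p) * ((∫ y, ((1 - t) * f₀ y + t * f₁ y) ^ p ∂μ) ^ (1 / p))⁻¹ *
        ((1 - t) * f₀ x + t * f₁ x)) ∂μ := by
  obtain ⟨ht0, ht1⟩ := ht
  have hs0 : 0 < 1 - t := by linarith
  have hp0 : 0 < p := by linarith
  have hgnn : ∀ x, 0 ≤ (1 - t) * f₀ x + t * f₁ x := fun x =>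
    add_nonneg (mul_nonneg hs0.le (h0nn x)) (mul_nonneg ht0.le (h1nn x))
  have hconv : ∀ x, ((1 - t) * f₀ x + t * f₁ x) ^ p ≤ (1 - t) * f₀ x ^ p + t * f₁ x ^ p := by
    intro x
    have h := (convexOn_rpow hp.le).2 (Set.mem_Ici.2 (h0nn x)) (Set.mem_Ici.2 (h1nn x))
      hs0.le ht0.le (by ring)
    simpa only [smul_eq_mul] using h
  have hRint : Integrable (fun x => (1 - t) * f₀ x ^ p + t * f₁ x ^ p) μ :=
    (h0int.const_mul _).add (h1int.const_mul _)
  have hGint : Integrable (fun x => ((1 - t) * f₀ x + t * f₁ x) ^ p) μ := by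
    refine hRint.mono'
      (((h0m.const_mul _).add (h1m.const_mul _)).pow_const p).aestronglyMeasurable
      (Eventually.of_forall fun x => ?_)
    rw [Real.norm_of_nonneg (Real.rpow_nonneg (hgnn x) p)]
    exact hconv x
  have hRA : ∫ x, ((1 - t) * f₀ x ^ p + t * f₁ x ^ p) ∂μ = A := by
    rw [integral_add (h0int.const_mul _) (h1int.const_mul _), integral_const_mul,
      integral_const_mul, h0A, h1A]
    ring
  have hGlt : ∫ y, ((1 - t) * f₀ y + t * f₁ y) ^ p ∂μ < A := by
    refine lt_of_le_of_ne (hRA ▸ integral_mono hGint hRint hconv) fun heq => hne ?_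
    have hz : ∫ x, (((1 - t) * f₀ x ^ p + t * f₁ x ^ p) -
        ((1 - t) * f₀ x + t * f₁ x) ^ p) ∂μ = 0 := by
      rw [integral_sub hRint hGint, hRA, heq, sub_self]
    rw [integral_eq_zero_iff_of_nonneg (fun x => sub_nonneg.2 (hconv x))
      (hRint.sub hGint)] at hz
    filter_upwards [hz] with x hx
    by_contra hxne
    have h := (strictConvexOn_rpow hp).2 (Set.mem_Ici.2 (h0nn x)) (Set.mem_Ici.2 (h1nn x)) hxne
      hs0 ht0 (by ring)
    simp only [smul_eq_mul] at h
    simp only [Pi.zero_apply] at hx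
    linarith
  have hGpos : 0 < ∫ y, ((1 - t) * f₀ y + t * f₁ y) ^ p ∂μ := by
    have h1 : ∫ y, (1 - t) ^ p * f₀ y ^ p ∂μ ≤ ∫ y, ((1 - t) * f₀ y + t * f₁ y) ^ p ∂μ := by
      refine integral_mono (h0int.const_mul _) hGint fun x => ?_
      simp only
      rw [← Real.mul_rpow hs0.le (h0nn x)]
      exact Real.rpow_le_rpow (mul_nonneg hs0.le (h0nn x))
        (le_add_of_nonneg_right (mul_nonneg ht0.le (h1nn x))) hp0.le
    rw [integral_const_mul, h0A] at h1
    exact lt_of_lt_of_le (mul_pos (Real.rpow_pos_of_pos hs0 p) hA) h1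
  have hVg : (fun x => V x * ((1 - t) * f₀ x + t * f₁ x)) =
      fun x => (1 - t) * (V x * f₀ x) + t * (V x * f₁ x) := by
    funext x; ring
  have hVgint : Integrable (fun x => V x * ((1 - t) * f₀ x + t * f₁ x)) μ := by
    rw [hVg]; exact (hV0int.const_mul _).add (hV1int.const_mul _)
  have hI : ∫ x, V x * ((1 - t) * f₀ x + t * f₁ x) ∂μ =
      (1 - t) * ∫ x, V x * f₀ x ∂μ + t * ∫ x, V x * f₁ x ∂μ := by
    rw [hVg, integral_add (hV0int.const_mul _) (hV1int.const_mul _), integral_const_mul,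
      integral_const_mul]
  have hVgnn : 0 ≤ᵐ[μ] fun x => V x * ((1 - t) * f₀ x + t * f₁ x) := by
    filter_upwards [hVpos] with x hx
    exact mul_nonneg hx.le (hgnn x)
  have hIpos : 0 < ∫ x, V x * ((1 - t) * f₀ x + t * f₁ x) ∂μ := by
    refine lt_of_le_of_ne (integral_nonneg_of_ae hVgnn) fun h => hGpos.ne' ?_
    have hz := (integral_eq_zero_iff_of_nonneg_ae hVgnn hVgint).1 h.symm
    refine integral_eq_zero_of_ae ?_
    filter_upwards [hz, hVpos] with x hx hVx
    have : (1 - t) * f₀ x + t * f₁ x = 0 := (mul_eq_zero.1 hx).resolve_left hVx.ne'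
    simp only [this, Pi.zero_apply]
    exact Real.zero_rpow hp0.ne'
  rw [← hI]
  set G := ∫ y, ((1 - t) * f₀ y + t * f₁ y) ^ p ∂μ with hG
  have hc : 1 < A ^ (1 / p) * (G ^ (1 / p))⁻¹ := by
    rw [← div_eq_mul_inv, one_lt_div (Real.rpow_pos_of_pos hGpos _)]
    exact Real.rpow_lt_rpow hGpos.le hGlt (by positivity)
  have hR : ∫ x, V x * (A ^ (1 / p) * (G ^ (1 / p))⁻¹ * ((1 - t) * f₀ x + t * f₁ x)) ∂μ =
      A ^ (1 / p) * (G ^ (1 / p))⁻¹ * ∫ x, V x * ((1 - t) * f₀ x + t * f₁ x) ∂μ := by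
    rw [← integral_const_mul]
    congr 1
    funext x; ring
  rw [hR]
  exact lt_mul_of_one_lt_left hIpos hc
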